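/- Completeness: for all λ-terms t, u, if t ⊑int u then t ⊑B u. -/

import Mathlib

set_option autoImplicit false

/-! ### Players -/

inductive Player : Type
  | white
  | black
deriving DecidableEq

/-- The opposite player. -/
def Player.op : Player → Player
  | .white => .black
  | .black => .white

/-- `gamma p q` is `0` if the players agree (silent) and `1` otherwise (interaction). -/
def Player.gamma (p q : Player) : ℕ := if p = q then 0 else 1

/-! ### Ordinary λ-terms (de Bruijn representation) -/

inductive Lam : Type
  | var : ℕ → Lam
  | lam : Lam → Lam
  | app : Lam → Lam → Lam
deriving DecidableEq

namespace Lam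

/-- Shift the free de Bruijn indices ≥ `d` by one. -/
def liftAt : Lam → ℕ → Lam
  | .var n, d => .var (if n < d then n else n + 1)
  | .lam t, d => .lam (t.liftAt (d + 1))
  | .app t u, d => .app (t.liftAt d) (u.liftAt d)

/-- Capture-avoiding substitution of `u` for the de Bruijn index `x`. -/
def subst : Lam → ℕ → Lam → Lam
  | .var n, x, u => if n = x then u else if x < n then .var (n - 1) else .var n
  | .lam t, x, u => .lam (t.subst (x + 1) (u.liftAt 0))
  | .app t s, x, u => .app (t.subst x u) (s.subst x u)

end Lam

/-- Root β-rule: `(λx.t) u ↦ t[x:=u]`. -/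
inductive LBetaRoot : Lam → Lam → Prop
  | beta (t u : Lam) : LBetaRoot (.app (.lam t) u) (t.subst 0 u)

/-- Root η-rule: `λx. t x ↦ t` with `x ∉ FV(t)` (enforced by the lifting). -/
inductive LEtaRoot : Lam → Lam → Prop
  | eta (t : Lam) : LEtaRoot (.lam (.app (t.liftAt 0) (.var 0))) t

/-- Closure of a root relation under all contexts. -/
inductive LFull (R : Lam → Lam → Prop) : Lam → Lam → Prop
  | root {t u : Lam} : R t u → LFull R t u
  | lam {t u : Lam} : LFull R t u → LFull R (.lam t) (.lam u)
  | appL {t t' : Lam} (u : Lam) : LFull R t t' → LFull R (.app t u) (.app t' u)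
  | appR (t : Lam) {u u' : Lam} : LFull R u u' → LFull R (.app t u) (.app t u')

/-- Closure under applicative spine contexts `⟨·⟩ t1 … tk`. -/
inductive LSpine (R : Lam → Lam → Prop) : Lam → Lam → Prop
  | root {t u : Lam} : R t u → LSpine R t u
  | appL {t t' : Lam} (u : Lam) : LSpine R t t' → LSpine R (.app t u) (.app t' u)

/-- Closure under head contexts `λx1…xn.⟨·⟩ t1 … tk`. -/
inductive LHead (R : Lam → Lam → Prop) : Lam → Lam → Prop
  | spine {t u : Lam} : LSpine R t u → LHead R t u
  | lam {t u : Lam} : LHead R t u → LHead R (.lam t) (.lam u)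

/-- β-reduction. -/
def LBeta : Lam → Lam → Prop := LFull LBetaRoot
/-- η-reduction. -/
def LEta : Lam → Lam → Prop := LFull LEtaRoot
/-- Head reduction. -/
def LHStep : Lam → Lam → Prop := LHead LBetaRoot
/-- Multistep head reduction. -/
def LHSteps : Lam → Lam → Prop := Relation.ReflTransGen LHStep

/-- β-conversion (reflexive-symmetric-transitive closure of β-reduction). -/
def LBetaConv : Lam → Lam → Prop :=
  Relation.ReflTransGen (fun a b => LBeta a b ∨ LBeta b a)
/-- η-conversion. -/
def LEtaConv : Lam → Lam → Prop :=
  Relation.ReflTransGen (fun a b => LEta a b ∨ LEta b a)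

/-- Head normal forms: no head step out of `t`. -/
def Lam.LHNF (t : Lam) : Prop := ∀ u, ¬ LHStep t u

/-- Head convergence: `t ⇓h`. -/
def Lam.HConv (t : Lam) : Prop := ∃ h, LHSteps t h ∧ h.LHNF

/-- Ordinary contexts (one hole). -/
inductive LCtx : Type
  | hole : LCtx
  | lam : LCtx → LCtx
  | appL : LCtx → Lam → LCtx
  | appR : Lam → LCtx → LCtx

/-- Plugging (allowing variable capture). -/
def LCtx.fill : LCtx → Lam → Lam
  | .hole, t => t
  | .lam C, t => .lam (C.fill t)
  | .appL C u, t => .app (C.fill t) u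
  | .appR s C, t => .app s (C.fill t)

/-- Head contextual preorder on λ-terms. -/
def CtxLe (t u : Lam) : Prop := ∀ C : LCtx, (C.fill t).HConv → (C.fill u).HConv

/-! ### Checkers terms -/

inductive CTerm : Type
  | var : ℕ → CTerm
  | lam : Player → CTerm → CTerm
  | app : Player → CTerm → CTerm → CTerm
deriving DecidableEq

namespace CTerm

/-- Shift the free de Bruijn indices ≥ `d` by one. -/
def liftAt : CTerm → ℕ → CTerm
  | .var n, d => .var (if n < d then n else n + 1)
  | .lam p t, d => .lam p (t.liftAt (d + 1))
  | .app p t u, d => .app p (t.liftAt d) (u.liftAt d)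

/-- Capture-avoiding substitution of `u` for the de Bruijn index `x`. -/
def subst : CTerm → ℕ → CTerm → CTerm
  | .var n, x, u => if n = x then u else if x < n then .var (n - 1) else .var n
  | .lam p t, x, u => .lam p (t.subst (x + 1) (u.liftAt 0))
  | .app p t s, x, u => .app p (t.subst x u) (s.subst x u)

/-- The underlying ordinary λ-term of a checkers term. -/
def untag : CTerm → Lam
  | .var n => .var n
  | .lam _ t => .lam t.untag
  | .app _ t u => .app t.untag u.untag

end CTerm

/-- Player lifting: tag every abstraction and application with player `p`. -/
def Lam.tag : Lam → Player → CTerm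
  | .var n, _ => .var n
  | .lam t, p => .lam p (t.tag p)
  | .app t u, p => .app p (t.tag p) (u.tag p)

/-- Silent β root rule: the abstraction and the application carry the same player. -/
inductive SilentRoot : CTerm → CTerm → Prop
  | beta (p : Player) (t u : CTerm) : SilentRoot (.app p (.lam p t) u) (t.subst 0 u)

/-- Interaction β root rule: the application carries the opposite player of the abstraction. -/
inductive InterRoot : CTerm → CTerm → Prop
  | beta (p : Player) (t u : CTerm) : InterRoot (.app p.op (.lam p t) u) (t.subst 0 u)

/-- Closure of a root relation under all checkers contexts. -/
inductive CFull (R : CTerm → CTerm → Prop) : CTerm → CTerm → Prop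
  | root {t u : CTerm} : R t u → CFull R t u
  | lam (p : Player) {t u : CTerm} : CFull R t u → CFull R (.lam p t) (.lam p u)
  | appL (p : Player) {t t' : CTerm} (u : CTerm) : CFull R t t' → CFull R (.app p t u) (.app p t' u)
  | appR (p : Player) (t : CTerm) {u u' : CTerm} : CFull R u u' → CFull R (.app p t u) (.app p t u')

/-- Closure under applicative spine contexts `⟨·⟩ @_{q1} t1 … @_{qk} tk`. -/
inductive CSpine (R : CTerm → CTerm → Prop) : CTerm → CTerm → Prop
  | root {t u : CTerm} : R t u → CSpine R t u
  | appL (p : Player) {t t' : CTerm} (u : CTerm) : CSpine R t t' → CSpine R (.app p t u) (.app p t' u)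

/-- Closure under checkers head contexts `λ_{p1}x1…λ_{pn}xn.⟨·⟩ @_{q1} t1 … @_{qk} tk`. -/
inductive CHead (R : CTerm → CTerm → Prop) : CTerm → CTerm → Prop
  | spine {t u : CTerm} : CSpine R t u → CHead R t u
  | lam (p : Player) {t u : CTerm} : CHead R t u → CHead R (.lam p t) (.lam p u)

/-- Silent β-reduction `→τ`. -/
def StepTau : CTerm → CTerm → Prop := CFull SilentRoot
/-- Interaction β-reduction `→⊛`. -/
def StepInt : CTerm → CTerm → Prop := CFull InterRoot
/-- Checkers β-reduction `→βch`. -/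
def StepBch (t u : CTerm) : Prop := StepTau t u ∨ StepInt t u

/-- Silent head reduction `→hτ`. -/
def HStepTau : CTerm → CTerm → Prop := CHead SilentRoot
/-- Interaction head reduction `→h⊛`. -/
def HStepInt : CTerm → CTerm → Prop := CHead InterRoot
/-- Checkers head reduction `→hch`. -/
def HStepCh (t u : CTerm) : Prop := HStepTau t u ∨ HStepInt t u

/-- Checkers head normal form. -/
def CTerm.HNF (t : CTerm) : Prop := ∀ u, ¬ HStepCh t u

/-- `BigStep t k` means `t ⇓^k`: the (deterministic) checkers head evaluation of `t`
terminates and performs exactly `k` interaction steps. -/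
inductive BigStep : CTerm → ℕ → Prop
  | nf {t : CTerm} : t.HNF → BigStep t 0
  | silent {t u : CTerm} {k : ℕ} : HStepTau t u → BigStep u k → BigStep t k
  | inter {t u : CTerm} {k : ℕ} : HStepInt t u → BigStep u k → BigStep t (k + 1)

/-- `HRed t n i u`: a checkers head reduction sequence from `t` to `u` of length `n`
containing exactly `i` interaction steps. -/
inductive HRed : CTerm → ℕ → ℕ → CTerm → Prop
  | refl (t : CTerm) : HRed t 0 0 t
  | silent {t u s : CTerm} {n i : ℕ} : HStepTau t u → HRed u n i s → HRed t (n + 1) i s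
  | inter {t u s : CTerm} {n i : ℕ} : HStepInt t u → HRed u n i s → HRed t (n + 1) (i + 1) s

/-- Checkers contexts (one hole). -/
inductive CCtx : Type
  | hole : CCtx
  | lam : Player → CCtx → CCtx
  | appL : Player → CCtx → CTerm → CCtx
  | appR : Player → CTerm → CCtx → CCtx

/-- Plugging (allowing variable capture). -/
def CCtx.fill : CCtx → CTerm → CTerm
  | .hole, t => t
  | .lam p C, t => .lam p (C.fill t)
  | .appL p C u, t => .app p (C.fill t) u
  | .appR p s C, t => .app p s (C.fill t)

/-- Player lifting of ordinary contexts. -/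
def LCtx.tag : LCtx → Player → CCtx
  | .hole, _ => .hole
  | .lam C, p => .lam p (C.tag p)
  | .appL C u, p => .appL p (C.tag p) (u.tag p)
  | .appR s C, p => .appR p (s.tag p) (C.tag p)

/-- Checkers interaction preorder `≼ctx⊛` on checkers terms. -/
def IntCtxLe (t u : CTerm) : Prop :=
  ∀ (C : CCtx) (k : ℕ), BigStep (C.fill t) k → BigStep (C.fill u) k

/-- Checkers interaction improvement `≼imp⊛` on checkers terms. -/
def ImpCtxLe (t u : CTerm) : Prop :=
  ∀ (C : CCtx) (k : ℕ), BigStep (C.fill t) k → ∃ k', k' ≤ k ∧ BigStep (C.fill u) k'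

/-- Interaction preorder `⊑int` on ordinary λ-terms, via black lifting. -/
def IntLe (t u : Lam) : Prop := IntCtxLe (t.tag .black) (u.tag .black)

/-- Interaction improvement `⊑int·imp` on ordinary λ-terms, via black lifting. -/
def ImpLe (t u : Lam) : Prop := ImpCtxLe (t.tag .black) (u.tag .black)

/-- Interaction equivalence `≡int`. -/
def IntEq (t u : Lam) : Prop := IntLe t u ∧ IntLe u t

/-- Silent conversion `=τ`: reflexive-symmetric-transitive closure of `→τ`. -/
def SilentConv : CTerm → CTerm → Prop :=
  Relation.ReflTransGen (fun a b => StepTau a b ∨ StepTau b a)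


/-! ### Böhm preorders -/

/-- `n` abstractions in front of a term. -/
def Lam.absN : ℕ → Lam → Lam
  | 0, t => t
  | n + 1, t => .lam (Lam.absN n t)

/-- Left-nested application of a term to a list of arguments. -/
def Lam.appList : Lam → List Lam → Lam
  | t, [] => t
  | t, u :: us => Lam.appList (.app t u) us

/-- One unfolding of the Böhm preorder clauses. -/
def BohmClause (R : Lam → Lam → Prop) (t u : Lam) : Prop :=
  (¬ t.HConv) ∨
    ∃ (n y : ℕ) (ts us : List Lam),
      ts.length = us.length ∧
      LHSteps t (Lam.absN n (Lam.appList (.var y) ts)) ∧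
      LHSteps u (Lam.absN n (Lam.appList (.var y) us)) ∧
      ∀ (i : ℕ) (hi : i < ts.length) (hj : i < us.length), R (ts.get ⟨i, hi⟩) (us.get ⟨i, hj⟩)

/-- The Böhm preorder `⊑B`: the largest relation closed under the clauses. -/
def BohmLe (t u : Lam) : Prop :=
  ∃ R : Lam → Lam → Prop, (∀ a b, R a b → BohmClause R a b) ∧ R t u

/-- One unfolding of the extensional Böhm preorder clauses. -/
def BohmEtaClause (R : Lam → Lam → Prop) (t u : Lam) : Prop :=
  (¬ t.HConv) ∨
    ∃ (n y : ℕ) (ts us : List Lam) (h h' : Lam),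
      ts.length = us.length ∧
      LHSteps t h ∧ h.LHNF ∧ LEtaConv h (Lam.absN n (Lam.appList (.var y) ts)) ∧
      LHSteps u h' ∧ h'.LHNF ∧ LEtaConv h' (Lam.absN n (Lam.appList (.var y) us)) ∧
      ∀ (i : ℕ) (hi : i < ts.length) (hj : i < us.length), R (ts.get ⟨i, hi⟩) (us.get ⟨i, hj⟩)

/-- The extensional Böhm preorder `⊑Bλη`: the largest relation closed under the clauses. -/
def BohmEtaLe (t u : Lam) : Prop :=
  ∃ R : Lam → Lam → Prop, (∀ a b, R a b → BohmEtaClause R a b) ∧ R t u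


namespace IB

/-! ### Simultaneous renaming and substitution -/

def upr (r : ℕ → ℕ) : ℕ → ℕ
  | 0 => 0
  | n + 1 => r n + 1

def ren : CTerm → (ℕ → ℕ) → CTerm
  | .var n, r => .var (r n)
  | .lam p t, r => .lam p (ren t (upr r))
  | .app p t u, r => .app p (ren t r) (ren u r)

def up (s : ℕ → CTerm) : ℕ → CTerm
  | 0 => .var 0
  | n + 1 => ren (s n) Nat.succ

def sub : CTerm → (ℕ → CTerm) → CTerm
  | .var n, s => s n
  | .lam p t, s => .lam p (sub t (up s))
  | .app p t u, s => .app p (sub t s) (sub u s)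

def scons (a : CTerm) (s : ℕ → CTerm) : ℕ → CTerm
  | 0 => a
  | n + 1 => s n

theorem upr_comp (r q : ℕ → ℕ) : (fun n => upr q (upr r n)) = upr (fun n => q (r n)) := by
  funext n; cases n <;> rfl

theorem ren_ren (t : CTerm) : ∀ r q, ren (ren t r) q = ren t (fun n => q (r n)) := by
  induction t with
  | var n => intros; rfl
  | lam p t ih => intro r q; simp only [ren, ih, upr_comp]
  | app p t u ih1 ih2 => intro r q; simp only [ren, ih1, ih2]

theorem up_upr (r : ℕ → ℕ) (s : ℕ → CTerm) :
    (fun n => up s (upr r n)) = up (fun n => s (r n)) := by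
  funext n; cases n <;> rfl

theorem sub_ren (t : CTerm) : ∀ r s, sub (ren t r) s = sub t (fun n => s (r n)) := by
  induction t with
  | var n => intros; rfl
  | lam p t ih => intro r q; simp only [ren, sub, ih, up_upr]
  | app p t u ih1 ih2 => intro r q; simp only [ren, sub, ih1, ih2]

theorem upr_up (s : ℕ → CTerm) (r : ℕ → ℕ) :
    (fun n => ren (up s n) (upr r)) = up (fun n => ren (s n) r) := by
  funext n
  cases n with
  | zero => rfl
  | succ n => simp only [up, ren_ren]; rfl

theorem ren_sub (t : CTerm) : ∀ s r, ren (sub t s) r = sub t (fun n => ren (s n) r) := by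
  induction t with
  | var n => intros; rfl
  | lam p t ih => intro r q; simp only [ren, sub, ih, upr_up]
  | app p t u ih1 ih2 => intro r q; simp only [ren, sub, ih1, ih2]

theorem up_up (s q : ℕ → CTerm) :
    (fun n => sub (up s n) (up q)) = up (fun n => sub (s n) q) := by
  funext n
  cases n with
  | zero => rfl
  | succ n => simp only [up, sub_ren, ren_sub]

theorem sub_sub (t : CTerm) : ∀ s q, sub (sub t s) q = sub t (fun n => sub (s n) q) := by
  induction t with
  | var n => intros; rfl
  | lam p t ih => intro r q; simp only [sub, ih, up_up]
  | app p t u ih1 ih2 => intro r q; simp only [sub, ih1, ih2]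

theorem up_var : up CTerm.var = CTerm.var := by
  funext n; cases n <;> rfl

theorem sub_var (t : CTerm) : sub t CTerm.var = t := by
  induction t with
  | var n => rfl
  | lam p t ih => simp only [sub, up_var, ih]
  | app p t u ih1 ih2 => simp only [sub, ih1, ih2]

theorem liftAt_eq (t : CTerm) : ∀ d, t.liftAt d = ren t (fun n => if n < d then n else n + 1) := by
  induction t with
  | var n => intros; rfl
  | lam p t ih =>
    intro d
    simp only [CTerm.liftAt, ren, ih]
    congr 2
    funext n
    cases n with
    | zero => simp [upr]
    | succ n => simp only [upr]; split_ifs <;> omega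
  | app p t u ih1 ih2 => intro d; simp only [CTerm.liftAt, ren, ih1, ih2]

theorem lift0_eq (t : CTerm) : t.liftAt 0 = ren t Nat.succ := by
  rw [liftAt_eq]; rfl

theorem subst_eq (t : CTerm) : ∀ x u, t.subst x u =
    sub t (fun n => if n = x then u else if x < n then .var (n - 1) else .var n) := by
  induction t with
  | var n => intros; rfl
  | lam p t ih =>
    intro x u
    simp only [CTerm.subst, sub, ih, lift0_eq]
    congr 2
    funext n
    cases n with
    | zero => simp [up]
    | succ n =>
      simp only [up]
      by_cases h1 : n = x
      · simp [h1]
      · by_cases h2 : x < n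
        · simp [h1, h2, ren]; omega
        · simp [h1, h2, ren]
  | app p t u ih1 ih2 => intro d; simp only [CTerm.subst, sub, ih1, ih2, implies_true]

theorem subst0_eq (t u : CTerm) : t.subst 0 u = sub t (scons u CTerm.var) := by
  rw [subst_eq]; congr 1; funext n; cases n <;> simp [scons]

theorem sub_up_subst (t a : CTerm) (s : ℕ → CTerm) :
    (sub t (up s)).subst 0 a = sub t (scons a s) := by
  rw [subst0_eq, sub_sub]; congr 1; funext n
  cases n with
  | zero => rfl
  | succ n =>
    simp only [up, sub_ren, scons]
    exact sub_var _

theorem subst_sub (t u : CTerm) (s : ℕ → CTerm) :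
    sub (t.subst 0 u) s = sub t (scons (sub u s) s) := by
  rw [subst0_eq, sub_sub]; congr 1; funext n
  cases n <;> rfl

theorem tag_liftAt (t : Lam) (p : Player) : ∀ d, (t.liftAt d).tag p = (t.tag p).liftAt d := by
  induction t with
  | var n => intros; rfl
  | lam t ih => intro d; simp only [Lam.liftAt, Lam.tag, CTerm.liftAt, ih]
  | app t u ih1 ih2 => intro d; simp only [Lam.liftAt, Lam.tag, CTerm.liftAt, ih1, ih2]

theorem tag_subst (t : Lam) (p : Player) :
    ∀ x u, (t.subst x u).tag p = (t.tag p).subst x (u.tag p) := by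
  induction t with
  | var n => intro x u; simp only [Lam.subst, Lam.tag, CTerm.subst]; split_ifs <;> rfl
  | lam t ih => intro d u; simp only [Lam.subst, Lam.tag, CTerm.subst, ih, tag_liftAt]
  | app t u ih1 ih2 => intro d u; simp only [Lam.subst, Lam.tag, CTerm.subst, ih1, ih2]

/-- Crude bound on the indices occurring in a term. -/
def bd : CTerm → ℕ
  | .var n => n + 1
  | .lam _ t => bd t
  | .app _ t u => max (bd t) (bd u)

theorem sub_agree (t : CTerm) : ∀ (B : ℕ) (s q : ℕ → CTerm), bd t ≤ B →
    (∀ n, n < B → s n = q n) → sub t s = sub t q := by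
  induction t with
  | var n => intro B s q h1 h2; exact h2 n h1
  | lam p t ih =>
    intro B s q h1 h2
    simp only [sub]
    congr 1
    apply ih B _ _ h1
    intro n hn
    cases n with
    | zero => rfl
    | succ n => simp only [up]; rw [h2 n (by omega)]
  | app p t u ih1 ih2 =>
    intro B s q h1 h2
    simp only [bd] at h1
    simp only [sub]
    rw [ih1 B s q (by omega) h2, ih2 B s q (by omega) h2]

/-! ### Deterministic counted head reduction -/

inductive SS : ℕ → CTerm → CTerm → Prop
  | beta (p q : Player) (t u : CTerm) : SS (Player.gamma q p) (.app q (.lam p t) u) (t.subst 0 u)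
  | app {c : ℕ} (p : Player) {t t' : CTerm} (u : CTerm) : SS c t t' → SS c (.app p t u) (.app p t' u)

inductive HS : ℕ → CTerm → CTerm → Prop
  | spine {c : ℕ} {t u : CTerm} : SS c t u → HS c t u
  | lam {c : ℕ} (p : Player) {t u : CTerm} : HS c t u → HS c (.lam p t) (.lam p u)

theorem SS.det {c x y} (h : SS c x y) : ∀ {d z}, SS d x z → c = d ∧ y = z := by
  induction h with
  | beta p q t u =>
    intro d z h
    cases h with
    | beta => exact ⟨rfl, rfl⟩
    | app _ _ h => cases h
  | app p u h ih =>
    intro d z h'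
    cases h' with
    | beta => cases h
    | app _ _ h' => obtain ⟨rfl, rfl⟩ := ih h'; exact ⟨rfl, rfl⟩

theorem HS.det {c x y} (h : HS c x y) : ∀ {d z}, HS d x z → c = d ∧ y = z := by
  induction h with
  | spine h =>
    intro d z h'
    cases h' with
    | spine h' => exact h.det h'
    | lam _ h' => cases h
  | lam p h ih =>
    intro d z h'
    cases h' with
    | spine h' => cases h'
    | lam _ h' => obtain ⟨rfl, rfl⟩ := ih h'; exact ⟨rfl, rfl⟩

theorem tau_HS {x y} (h : HStepTau x y) : HS 0 x y := by
  unfold HStepTau at h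
  induction h with
  | spine h =>
    refine .spine ?_
    induction h with
    | root h =>
      cases h with
      | beta p t u =>
        have := SS.beta p p t u
        simpa [Player.gamma] using this
    | appL p u h ih => exact .app p u ih
  | lam p h ih => exact .lam p ih

theorem inter_HS {x y} (h : HStepInt x y) : HS 1 x y := by
  unfold HStepInt at h
  induction h with
  | spine h =>
    refine .spine ?_
    induction h with
    | root h =>
      cases h with
      | beta p t u =>
        have := SS.beta p p.op t u
        have h2 : Player.gamma p.op p = 1 := by cases p <;> rfl
        rwa [h2] at this
    | appL p u h ih => exact .app p u ih
  | lam p h ih => exact .lam p ih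

theorem SS_cases {c x y} (h : SS c x y) :
    (c = 0 ∧ CSpine SilentRoot x y) ∨ (c = 1 ∧ CSpine InterRoot x y) := by
  induction h with
  | beta p q t u =>
    by_cases h : q = p
    · subst h; exact Or.inl ⟨by simp [Player.gamma], .root (.beta _ _ _)⟩
    · have h2 : q = p.op := by cases p <;> cases q <;> simp_all [Player.op]
      subst h2
      exact Or.inr ⟨by simp [Player.gamma, h], .root (.beta _ _ _)⟩
  | app p u h ih =>
    rcases ih with ⟨h1, h2⟩ | ⟨h1, h2⟩
    · exact Or.inl ⟨h1, .appL _ _ h2⟩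
    · exact Or.inr ⟨h1, .appL _ _ h2⟩

theorem HS_cases {c x y} (h : HS c x y) :
    (c = 0 ∧ HStepTau x y) ∨ (c = 1 ∧ HStepInt x y) := by
  induction h with
  | spine h =>
    rcases SS_cases h with ⟨h1, h2⟩ | ⟨h1, h2⟩
    · exact Or.inl ⟨h1, .spine h2⟩
    · exact Or.inr ⟨h1, .spine h2⟩
  | lam p h ih =>
    rcases ih with ⟨h1, h2⟩ | ⟨h1, h2⟩
    · exact Or.inl ⟨h1, .lam _ h2⟩
    · exact Or.inr ⟨h1, .lam _ h2⟩

/-- `x` evaluates like `y`, at an additional cost of `c` interactions. -/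
def Ev (x y : CTerm) (c : ℕ) : Prop :=
  ∀ k, BigStep x k ↔ ∃ k', k = k' + c ∧ BigStep y k'

theorem Ev.refl (x : CTerm) : Ev x x 0 := by
  intro k; simp

theorem Ev.trans {x y z c d} (h : Ev x y c) (h' : Ev y z d) : Ev x z (c + d) := by
  intro k
  rw [h k]
  constructor
  · rintro ⟨k', rfl, h2⟩
    obtain ⟨k'', rfl, h3⟩ := (h' k').1 h2
    exact ⟨k'', by omega, h3⟩
  · rintro ⟨k', rfl, h2⟩
    exact ⟨k' + d, by omega, (h' _).2 ⟨k', rfl, h2⟩⟩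

theorem Ev.cast {x y c d} (h : Ev x y c) (e : c = d) : Ev x y d := e ▸ h

/-- common reduct -/
theorem Ev.join {x y z w c} (h : Ev x y c) (h' : Ev z w c) (e : Ev y w 0) : Ev x z 0 := by
  intro k
  simp only [add_zero, exists_eq_left']
  rw [h k, h' k]
  constructor
  · rintro ⟨k', rfl, h2⟩
    obtain ⟨k'', hk, h3⟩ := (e k').1 h2
    exact ⟨k'', by omega, h3⟩
  · rintro ⟨k', rfl, h2⟩
    exact ⟨k', by omega, (e _).2 ⟨k', rfl, h2⟩⟩

theorem HS.ev {c x y} (h : HS c x y) : Ev x y c := by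
  intro k
  constructor
  · intro hb
    cases hb with
    | nf hn =>
      rcases HS_cases h with ⟨_, h2⟩ | ⟨_, h2⟩
      · exact absurd (Or.inl h2) (hn y)
      · exact absurd (Or.inr h2) (hn y)
    | silent hs hb =>
      obtain ⟨rfl, rfl⟩ := h.det (tau_HS hs)
      exact ⟨k, rfl, hb⟩
    | inter hs hb =>
      obtain ⟨rfl, rfl⟩ := h.det (inter_HS hs)
      exact ⟨_, rfl, hb⟩
  · rintro ⟨k', rfl, hb⟩
    rcases HS_cases h with ⟨rfl, h2⟩ | ⟨rfl, h2⟩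
    · exact .silent h2 hb
    · exact .inter h2 hb

theorem bs_ind {Q : CTerm → Prop} (H : ∀ x, (∀ c y, HS c x y → Q y) → Q x)
    {x k} (h : BigStep x k) : Q x := by
  induction h with
  | nf hn =>
    refine H _ ?_
    intro c y h
    rcases HS_cases h with ⟨_, h2⟩ | ⟨_, h2⟩
    · exact absurd (Or.inl h2) (hn y)
    · exact absurd (Or.inr h2) (hn y)
  | silent hs hb ih =>
    refine H _ ?_
    intro c y h
    obtain ⟨rfl, rfl⟩ := h.det (tau_HS hs)
    exact ih
  | inter hs hb ih =>
    refine H _ ?_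
    intro c y h
    obtain ⟨rfl, rfl⟩ := h.det (inter_HS hs)
    exact ih

theorem hnf_iff {x : CTerm} : x.HNF ↔ ∀ c y, ¬ HS c x y := by
  constructor
  · intro hn c y h
    rcases HS_cases h with ⟨_, h2⟩ | ⟨_, h2⟩
    · exact hn y (Or.inl h2)
    · exact hn y (Or.inr h2)
  · rintro h y (h2 | h2)
    · exact h _ _ (tau_HS h2)
    · exact h _ _ (inter_HS h2)

theorem bs_lam {p t k} : BigStep (.lam p t) k ↔ BigStep t k := by
  constructor
  · intro h
    generalize hx : CTerm.lam p t = x at h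
    induction h generalizing t with
    | nf hn =>
      subst hx
      refine .nf ?_
      rw [hnf_iff] at hn ⊢
      intro c y h
      exact hn _ _ (.lam p h)
    | silent hs hb ih =>
      subst hx
      have hs' := hs
      cases hs with
      | spine h => cases h with | root h => cases h
      | lam _ h => exact .silent h (ih rfl)
    | inter hs hb ih =>
      subst hx
      cases hs with
      | spine h => cases h with | root h => cases h
      | lam _ h => exact .inter h (ih rfl)
  · intro h
    induction h with
    | nf hn =>
      refine .nf ?_
      rw [hnf_iff] at hn ⊢
      intro c y h
      cases h with
      | spine h => cases h
      | lam _ h => exact hn _ _ h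
    | silent hs hb ih => exact .silent (.lam _ hs) ih
    | inter hs hb ih => exact .inter (.lam _ hs) ih

/-! ### Spines -/

def appl : CTerm → List (Player × CTerm) → CTerm
  | t, [] => t
  | t, a :: S => appl (.app a.1 t a.2) S

def tg (q : Player) (as : List CTerm) : List (Player × CTerm) := as.map (fun a => (q, a))

theorem appl_append (S1 S2 : List (Player × CTerm)) :
    ∀ t, appl t (S1 ++ S2) = appl (appl t S1) S2 := by
  induction S1 with
  | nil => intro t; rfl
  | cons a S ih => intro t; exact ih _

theorem sub_appl (S : List (Player × CTerm)) (s : ℕ → CTerm) :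
    ∀ t, sub (appl t S) s = appl (sub t s) (S.map (fun a => (a.1, sub a.2 s))) := by
  induction S with
  | nil => intro t; rfl
  | cons a S ih => intro t; simp only [appl, ih, List.map_cons, sub]

theorem SS_appl (S : List (Player × CTerm)) :
    ∀ {c t u}, SS c t u → SS c (appl t S) (appl u S) := by
  induction S with
  | nil => intro c t u h; exact h
  | cons a S ih => intro c t u h; exact ih (.app _ _ h)

theorem no_SS_var (S : List (Player × CTerm)) :
    ∀ t, (∀ c y, ¬ SS c t y) → (∀ p b, t ≠ .lam p b) → ∀ c y, ¬ SS c (appl t S) y := by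
  induction S with
  | nil => intro t h _; exact h
  | cons a S ih =>
    intro t h h2
    refine ih _ ?_ (by intro p b h; cases h)
    intro c y h3
    cases h3 with
    | beta => exact h2 _ _ rfl
    | app _ _ h3 => exact h _ _ h3

theorem appl_not_lam (S : List (Player × CTerm)) :
    ∀ t, (∀ p b, t ≠ .lam p b) → ∀ p b, appl t S ≠ .lam p b := by
  induction S with
  | nil => intro t h; exact h
  | cons a S ih =>
    intro t h
    exact ih _ (by intro p b h; cases h)

theorem bs_var (S : List (Player × CTerm)) (x : ℕ) : BigStep (appl (.var x) S) 0 := by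
  refine .nf ?_
  rw [hnf_iff]
  intro c y h
  generalize hx : appl (.var x) S = z at h
  cases h with
  | spine h =>
    subst hx
    exact no_SS_var S (.var x) (by intro c y h; cases h) (by intro p b h; cases h) _ _ h
  | lam p h =>
    exact appl_not_lam S (.var x) (by intro p b h; cases h) _ _ hx

theorem ev_beta (p q : Player) (t a : CTerm) (s : ℕ → CTerm) (S : List (Player × CTerm)) :
    Ev (appl (sub (.lam p t) s) ((q, a) :: S)) (appl (sub t (scons a s)) S) (Player.gamma q p) := by
  rw [← sub_up_subst]
  exact HS.ev (.spine (SS_appl S (.beta p q _ a)))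

def lams (p : Player) : ℕ → CTerm → CTerm
  | 0, t => t
  | n + 1, t => .lam p (lams p n t)

def sl : List CTerm → (ℕ → CTerm) → (ℕ → CTerm)
  | [], s => s
  | a :: as, s => sl as (scons a s)

theorem ev_lams (p q : Player) (t : CTerm) (as : List CTerm) : ∀ (m M : ℕ) (s : ℕ → CTerm)
    (S : List (Player × CTerm)), M = as.length + m →
    Ev (appl (sub (lams p M t) s) (tg q as ++ S)) (appl (sub (lams p m t) (sl as s)) S)
      (as.length * Player.gamma q p) := by
  induction as with
  | nil => intro m M s S h; simp at h; subst h; simpa [tg, sl] using Ev.refl _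
  | cons a as ih =>
    intro m M s S h
    obtain ⟨M', rfl⟩ : ∃ M', M = M' + 1 := ⟨as.length + m, by simp at h; omega⟩
    have h1 := ev_beta p q (lams p M' t) a s (tg q as ++ S)
    have h2 := ih m M' (scons a s) S (by simp at h; omega)
    exact (h1.trans h2).cast (by simp; ring)

theorem sl_ge (as : List CTerm) : ∀ s v, sl as s (as.length + v) = s v := by
  induction as with
  | nil => intro s v; simp [sl]
  | cons a as ih =>
    intro s v
    have := ih (scons a s) (v + 1)
    simp only [sl, List.length_cons]
    rw [show as.length + 1 + v = as.length + (v + 1) by omega, this]; rfl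

theorem sl_lt (as : List CTerm) : ∀ s i (hi : i < as.length), sl as s (as.length - 1 - i) = as[i] := by
  induction as with
  | nil => intro s i hi; simp at hi
  | cons a as ih =>
    intro s i hi
    simp only [sl, List.length_cons]
    cases i with
    | zero =>
      have := sl_ge as (scons a s) 0
      simpa [scons] using this
    | succ i =>
      have := ih (scons a s) i (by simpa using hi)
      rw [show as.length + 1 - 1 - (i + 1) = as.length - 1 - i by omega, this]; rfl

theorem sl_append (as bs : List CTerm) : ∀ s, sl (as ++ bs) s = sl bs (sl as s) := by
  induction as with
  | nil => intro s; rfl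
  | cons a as ih => intro s; exact ih _

def argsOf (s : ℕ → CTerm) : ℕ → List CTerm
  | 0 => []
  | n + 1 => s n :: argsOf s n

theorem argsOf_length (s : ℕ → CTerm) (n : ℕ) : (argsOf s n).length = n := by
  induction n with
  | zero => rfl
  | succ n ih => simp [argsOf, ih]

theorem sl_argsOf (s : ℕ → CTerm) (n : ℕ) : sl (argsOf s n) (fun v => s (n + v)) = s := by
  induction n with
  | zero => simp [sl, argsOf]
  | succ n ih =>
    simp only [sl, argsOf]
    have : scons (s n) (fun v => s (n + 1 + v)) = fun v => s (n + v) := by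
      funext v
      cases v with
      | zero => rfl
      | succ v => simp only [scons]; congr 1; omega
    rw [this, ih]

theorem argsOf_const (x : CTerm) (n : ℕ) : argsOf (fun _ => x) n = List.replicate n x := by
  induction n with
  | zero => rfl
  | succ n ih => simp [argsOf, ih, List.replicate_succ]

theorem sl_indep (as : List CTerm) (s q : ℕ → CTerm) (v : ℕ) (h : v < as.length) :
    sl as s v = sl as q v := by
  have h1 := sl_lt as s (as.length - 1 - v) (by omega)
  have h2 := sl_lt as q (as.length - 1 - v) (by omega)
  rw [show as.length - 1 - (as.length - 1 - v) = v by omega] at h1 h2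
  rw [h1, h2]

/-! ### The counters, tuplers and selectors -/

def ctr : ℕ → CTerm → CTerm
  | 0, x => x
  | c + 1, x => .app .white (.lam .black (.var 0)) (ctr c x)

theorem ev_ctr (c : ℕ) (x : CTerm) (S : List (Player × CTerm)) :
    Ev (appl (ctr c x) S) (appl x S) c := by
  induction c with
  | zero => exact Ev.refl _
  | succ c ih =>
    have h1 : Ev (appl (ctr (c + 1) x) S) (appl (ctr c x) S) 1 :=
      HS.ev (.spine (SS_appl S (.beta .black .white (.var 0) (ctr c x))))
    exact (h1.trans ih).cast (by omega)

def body (K : ℕ) : CTerm :=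
  appl (.var 0) (tg .white ((List.range K).map fun i => CTerm.var (K - i)))

def P0 (K : ℕ) : CTerm := lams .white (K + 1) (body K)

def P (K c : ℕ) : CTerm := ctr c (P0 K)

theorem sub_body (as : List CTerm) (b : CTerm) (s : ℕ → CTerm) :
    sub (body as.length) (sl (as ++ [b]) s) = appl b (tg .white as) := by
  rw [body, sub_appl, sl_append]
  congr 1
  simp only [tg, List.map_map]
  apply List.ext_getElem
  · simp
  · intro i h1 h2
    simp only [List.getElem_map, List.getElem_range, Function.comp]
    congr 1
    have hi : i < as.length := by simpa using h2
    have := sl_lt as s i hi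
    rw [show as.length - i = (as.length - 1 - i) + 1 by omega]
    exact this

theorem ev_P (K c : ℕ) (ts S1 : List CTerm) (b : CTerm) (S : List (Player × CTerm))
    (hK : ts.length + S1.length = K) :
    Ev (appl (P K c) (tg .black ts ++ (tg .white (S1 ++ [b]) ++ S)))
      (appl b (tg .white (ts ++ S1) ++ S)) (ts.length + c) := by
  have h0 := ev_ctr c (P0 K) (tg .black ts ++ (tg .white (S1 ++ [b]) ++ S))
  have h1 := ev_lams .white .black (body K) ts (S1.length + 1) (K + 1) CTerm.var
    (tg .white (S1 ++ [b]) ++ S) (by omega)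
  have h2 := ev_lams .white .white (body K) (S1 ++ [b]) 0 (S1.length + 1) (sl ts CTerm.var)
    S (by simp)
  rw [sub_var] at h1
  have h3 := (h0.trans (h1.trans h2)).cast
    (show _ = ts.length + c by simp [Player.gamma]; omega)
  rw [← sl_append, ← List.append_assoc ts S1 [b]] at h3
  have h4 : K = (ts ++ S1).length := by simp [hK]
  have h5 := sub_body (ts ++ S1) b CTerm.var
  rw [← h4] at h5
  simp only [lams] at h3
  rw [h5, ← appl_append] at h3
  exact h3

theorem ev_sel (as : List CTerm) (K i : ℕ) (hK : as.length = K) (hi : i < as.length)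
    (S : List (Player × CTerm)) :
    Ev (appl (lams .white K (.var (K - 1 - i))) (tg .white as ++ S))
      (appl as[i] S) 0 := by
  subst hK
  have h := ev_lams .white .white (.var (as.length - 1 - i)) as 0 as.length CTerm.var S rfl
  rw [sub_var] at h
  simp only [lams, sub] at h
  rw [sl_lt as _ i hi] at h
  exact h.cast (by simp [Player.gamma])

/-! ### Head reduction of λ-terms and evaluation -/

theorem tag_spine {t t' : Lam} (h : LSpine LBetaRoot t t') (s : ℕ → CTerm) :
    SS 0 (sub (t.tag .black) s) (sub (t'.tag .black) s) := by
  induction h with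
  | root h =>
    cases h with
    | beta t u =>
      rw [tag_subst, subst_sub, ← sub_up_subst]
      exact SS.beta .black .black _ _
  | appL u h ih => exact .app _ _ ih

theorem ev_lhstep {t t' : Lam} (h : LHStep t t') : ∀ s S,
    Ev (appl (sub (t.tag .black) s) S) (appl (sub (t'.tag .black) s) S) 0 := by
  unfold LHStep at h
  induction h with
  | spine h => intro s S; exact HS.ev (.spine (SS_appl S (tag_spine h s)))
  | lam h ih =>
    intro s S
    cases S with
    | nil =>
      intro k
      simp only [appl, Lam.tag, sub, bs_lam]
      exact ih (up s) [] k
    | cons a S =>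
      obtain ⟨q, a⟩ := a
      exact (ev_beta .black q _ a s S).join (ev_beta .black q _ a s S) (ih (scons a s) S)

theorem ev_lhsteps {t t' : Lam} (h : LHSteps t t') (s : ℕ → CTerm) (S : List (Player × CTerm)) :
    Ev (appl (sub (t.tag .black) s) S) (appl (sub (t'.tag .black) s) S) 0 := by
  unfold LHSteps at h
  induction h with
  | refl => exact Ev.refl _
  | tail _ h ih => exact ih.trans (ev_lhstep h s S)

theorem tag_absN (n : ℕ) (t : Lam) : (Lam.absN n t).tag .black = lams .black n (t.tag .black) := by
  induction n with
  | zero => rfl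
  | succ n ih => simp only [Lam.absN, Lam.tag, lams, ih]

theorem tag_appList (ts : List Lam) : ∀ t : Lam, (Lam.appList t ts).tag .black =
    appl (t.tag .black) (tg .black (ts.map (fun a => a.tag .black))) := by
  induction ts with
  | nil => intro t; rfl
  | cons a ts ih => intro t; exact ih _

/-- The instance of a term. -/
def ins (K : ℕ) (c : ℕ → ℕ) (t : Lam) : CTerm := sub (t.tag .black) (fun v => P K (c v))

theorem fire {t : Lam} {n y : ℕ} {ts : List Lam}
    (h : LHSteps t (Lam.absN n (Lam.appList (.var y) ts)))
    (K : ℕ) (c : ℕ → ℕ) (S1 : List CTerm) (b : CTerm) (S : List CTerm)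
    (hK : ts.length + S1.length = K) :
    Ev (appl (ins K (fun v => c (n + v)) t)
        (tg .white (argsOf (fun v => P K (c v)) n ++ (S1 ++ b :: S))))
      (appl b (tg .white (ts.map (ins K c) ++ S1 ++ S))) (n + ts.length + c y) := by
  have h1 := ev_lhsteps h (fun v => P K (c (n + v)))
    (tg .white (argsOf (fun v => P K (c v)) n ++ (S1 ++ b :: S)))
  have h2 := ev_lams .black .white ((Lam.appList (.var y) ts).tag .black)
    (argsOf (fun v => P K (c v)) n) 0 n (fun v => P K (c (n + v))) (tg .white (S1 ++ b :: S))
    (by rw [argsOf_length]; rfl)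
  rw [sl_argsOf (fun v => P K (c v)) n, argsOf_length] at h2
  have h3 := ev_P K (c y) (ts.map (ins K c)) S1 b (tg .white S) (by simpa using hK)
  have e1 : appl (sub (lams .black 0 ((Lam.appList (.var y) ts).tag .black)) (fun v => P K (c v)))
      (tg .white (S1 ++ b :: S)) = appl (P K (c y)) (tg .black (ts.map (ins K c)) ++
        (tg .white (S1 ++ [b]) ++ tg .white S)) := by
    rw [appl_append]
    simp only [lams, tag_appList, sub_appl, Lam.tag, sub]
    congr 1
    · congr 1
      simp [tg, ins]
    · simp [tg]
  rw [e1] at h2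
  rw [tag_absN] at h1
  have e2 : tg .white (argsOf (fun v => P K (c v)) n ++ (S1 ++ b :: S)) =
      tg .white (argsOf (fun v => P K (c v)) n) ++ tg .white (S1 ++ b :: S) := by simp [tg]
  rw [e2] at h1 ⊢
  have e3 : tg .white (ts.map (ins K c) ++ S1 ++ S) =
      tg .white (ts.map (ins K c) ++ S1) ++ tg .white S := by simp [tg]
  rw [e3]
  refine (h1.trans (h2.trans h3)).cast ?_
  simp [Player.gamma]; omega

/-! ### Shapes of λ-terms -/

theorem appList_snoc (ts : List Lam) (u : Lam) : ∀ t,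
    Lam.appList t (ts ++ [u]) = .app (Lam.appList t ts) u := by
  induction ts with
  | nil => intro t; rfl
  | cons a ts ih => intro t; exact ih _

theorem shape (t : Lam) : (∃ y ts, t = Lam.appList (.var y) ts) ∨ (∃ t', LSpine LBetaRoot t t') ∨
    ∃ b, t = .lam b := by
  induction t with
  | var n => exact Or.inl ⟨n, [], rfl⟩
  | lam t _ => exact Or.inr (Or.inr ⟨t, rfl⟩)
  | app t u ih _ =>
    rcases ih with ⟨y, ts, rfl⟩ | ⟨t', h⟩ | ⟨b, rfl⟩
    · exact Or.inl ⟨y, ts ++ [u], (appList_snoc _ _ _).symm⟩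
    · exact Or.inr (Or.inl ⟨_, .appL u h⟩)
    · exact Or.inr (Or.inl ⟨_, .root (.beta b u)⟩)

theorem lhnf_shape (t : Lam) (h : t.LHNF) : ∃ n y ts, t = Lam.absN n (Lam.appList (.var y) ts) := by
  induction t with
  | var n => exact ⟨0, n, [], rfl⟩
  | lam t ih =>
    obtain ⟨n, y, ts, rfl⟩ := ih (fun u hu => h _ (.lam hu))
    exact ⟨n + 1, y, ts, rfl⟩
  | app t u _ _ =>
    rcases shape (.app t u) with ⟨y, ts, e⟩ | ⟨t', h'⟩ | ⟨b, e⟩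
    · exact ⟨0, y, ts, e⟩
    · exact absurd (.spine h') (h t')
    · cases e

/-- Having a syntactic head normal form. -/
def Has (t : Lam) : Prop := ∃ n y ts, LHSteps t (Lam.absN n (Lam.appList (.var y) ts))

theorem HConv_has {t : Lam} (h : t.HConv) : Has t := by
  obtain ⟨h, h1, h2⟩ := h
  obtain ⟨n, y, ts, rfl⟩ := lhnf_shape h h2
  exact ⟨n, y, ts, h1⟩

theorem lam_steps {t t' : Lam} (h : LHSteps t t') : LHSteps (.lam t) (.lam t') := by
  unfold LHSteps at *
  induction h with
  | refl => exact .refl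
  | tail _ h ih => exact ih.tail (.lam h)

theorem Has.lam {t : Lam} (h : Has t) : Has (.lam t) := by
  obtain ⟨n, y, ts, h⟩ := h
  exact ⟨n + 1, y, ts, lam_steps h⟩

def wrap : ℕ → CTerm → CTerm
  | 0, t => t
  | n + 1, t => wrap n (.lam .black t)

theorem HS_wrap (n : ℕ) : ∀ {c x y}, HS c x y → HS c (wrap n x) (wrap n y) := by
  induction n with
  | zero => intro c x y h; exact h
  | succ n ih => intro c x y h; exact ih (.lam _ h)

theorem has_of_bs {x : CTerm} {k : ℕ} (h : BigStep x k) :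
    ∀ (u : Lam) (l : ℕ) (s : ℕ → CTerm) (S : List (Player × CTerm)),
      x = wrap l (appl (sub (u.tag .black) s) S) → Has u := by
  refine bs_ind (Q := fun x => ∀ (u : Lam) (l : ℕ) (s : ℕ → CTerm) (S : List (Player × CTerm)),
      x = wrap l (appl (sub (u.tag .black) s) S) → Has u) ?_ h
  intro x ih u
  induction u with
  | var n => intros; exact ⟨0, n, [], .refl⟩
  | lam u ihu =>
    intro l s S e
    cases S with
    | nil => exact (ihu (l + 1) (up s) [] e).lam
    | cons a S =>
      obtain ⟨q, a⟩ := a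
      have h1 : HS (Player.gamma q .black) x (wrap l (appl (sub (u.tag .black) (scons a s)) S)) := by
        rw [e, ← sub_up_subst]
        exact HS_wrap l (.spine (SS_appl S (.beta .black q _ a)))
      exact (ih _ _ h1 u l (scons a s) S rfl).lam
  | app t u _ _ =>
    intro l s S e
    rcases shape (.app t u) with ⟨y, ts, e'⟩ | ⟨t', h'⟩ | ⟨b, e'⟩
    · exact ⟨0, y, ts, by rw [e']; exact .refl⟩
    · have h1 : HS 0 x (wrap l (appl (sub (t'.tag .black) s) S)) := by
        rw [e]
        exact HS_wrap l (.spine (SS_appl S (tag_spine h' s)))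
      obtain ⟨n, y, ts, h2⟩ := ih _ _ h1 t' l s S rfl
      exact ⟨n, y, ts, .head (.spine h') h2⟩
    · exact absurd e' (by simp)

/-! ### The bisimulation candidate -/

def Rel (t u : Lam) : Prop :=
  ∃ K0, ∀ K, K0 ≤ K → ∀ (c : ℕ → ℕ) (S : List CTerm) (k : ℕ),
    BigStep (appl (ins K c t) (tg .white S)) k → BigStep (appl (ins K c u) (tg .white S)) k

theorem ev_bs {x y : CTerm} {c : ℕ} (h : Ev x y c) (h0 : BigStep y 0) : BigStep x c :=
  (h c).2 ⟨0, by simp, h0⟩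

theorem ev_bs_inv {x y : CTerm} {c k : ℕ} (h : Ev x y c) (h0 : BigStep y 0)
    (hx : BigStep x k) : k = c := by
  -- evaluation is deterministic
  have key : ∀ {z : CTerm} {a b : ℕ}, BigStep z a → BigStep z b → a = b := by
    intro z a b ha
    induction ha generalizing b with
    | nf hn =>
      intro hb
      cases hb with
      | nf _ => rfl
      | silent hs _ => exact absurd (Or.inl hs) (hn _)
      | inter hs _ => exact absurd (Or.inr hs) (hn _)
    | silent hs _ ih =>
      intro hb
      obtain ⟨k', rfl, hb2⟩ := ((tau_HS hs).ev b).1 hb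
      rw [ih hb2]
    | inter hs _ ih =>
      intro hb
      obtain ⟨k', rfl, hb2⟩ := ((inter_HS hs).ev b).1 hb
      rw [ih hb2]
  exact key hx (ev_bs h h0)

theorem ctr_bs {x : CTerm} {S : List (Player × CTerm)} {d e v : ℕ}
    (h : Ev x (appl (ctr d (.var v)) S) e) : ∀ k, BigStep x k ↔ k = e + d := by
  intro k
  have h2 := h.trans (ev_ctr d (.var v) S)
  constructor
  · exact ev_bs_inv h2 (bs_var S v)
  · rintro rfl; exact ev_bs h2 (bs_var S v)

/-- The testing stack: `M` tuplers, then counters. -/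
theorem test {t : Lam} {n y : ℕ} {ts : List Lam}
    (h : LHSteps t (Lam.absN n (Lam.appList (.var y) ts)))
    (K M : ℕ) (d : ℕ → ℕ) (hn : n ≤ M) (hK : ts.length + M ≤ K) :
    ∀ k, BigStep (appl (ins K (fun _ => 0) t) (tg .white (List.replicate M (P K 0) ++
      (List.range (K + 1)).map (fun i => ctr (d i) (.var 0))))) k ↔
      k = n + ts.length + d (K + n - M - ts.length) := by
  set e := K + n - M - ts.length with he
  have hr : (List.range (K + 1)).map (fun i => ctr (d i) (.var 0)) =
      (List.range e).map (fun i => ctr (d i) (.var 0)) ++ ctr (d e) (.var 0) ::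
        (List.range (K - e)).map (fun i => ctr (d (e + 1 + i)) (.var 0)) := by
    have : K + 1 = (e + 1) + (K - e) := by omega
    rw [this, List.range_add, List.range_succ]
    simp [Function.comp_def]
  have h1 := fire h K (fun _ => 0) (List.replicate (M - n) (P K 0) ++
    (List.range e).map (fun i => ctr (d i) (.var 0))) (ctr (d e) (.var 0))
    ((List.range (K - e)).map (fun i => ctr (d (e + 1 + i)) (.var 0))) (by simp; omega)
  have hs : List.replicate M (P K 0) = argsOf (fun _ => P K 0) n ++ List.replicate (M - n) (P K 0) := by
    rw [argsOf_const, List.replicate_append_replicate]; congr 1; omega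
  rw [hr, hs]
  simp only [List.append_assoc] at h1 ⊢
  have := ctr_bs h1
  intro k
  rw [this k]
  simp

theorem rel_clause (t u : Lam) (h : Rel t u) : BohmClause Rel t u := by
  by_cases hc : t.HConv
  swap
  · exact Or.inl hc
  right
  obtain ⟨K0, h⟩ := h
  obtain ⟨n, y, ts, ht⟩ := HConv_has hc
  have hu : Has u := by
    have h1 := (test ht (K0 + ts.length + n) n (fun _ => 0) le_rfl (by omega) _).2 rfl
    have h2 := h _ (by omega) _ _ _ h1
    exact has_of_bs h2 u 0 _ _ rfl
  obtain ⟨m, z, us, hu⟩ := hu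
  -- first two tests: numbers of abstractions and arguments agree
  have T : ∀ d : ℕ → ℕ, ∀ K, K = K0 + ts.length + us.length + n + m →
      n + ts.length + d (K + n - (n + m) - ts.length) =
      m + us.length + d (K + m - (n + m) - us.length) := by
    intro d K hK
    have h1 := (test ht K (n + m) d (by omega) (by omega) _).2 rfl
    have h2 := h _ (by omega) _ _ _ h1
    exact (test hu K (n + m) d (by omega) (by omega) _).1 h2
  have T1 := T (fun _ => 0) _ rfl
  have T2 := T (fun i => i) _ rfl
  have hnm : n = m := by omega
  have hl : ts.length = us.length := by omega
  clear T T1 T2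
  subst hnm
  -- third test: head variables agree
  have hyz : y = z := by
    set K := K0 + ts.length with hK
    have h1 := fire ht K (fun v => v) (List.replicate K0 (.var 0)) (.var 0) [] (by simp; omega)
    have h2 := fire hu K (fun v => v) (List.replicate K0 (.var 0)) (.var 0) [] (by simp; omega)
    have h3 := h K (by omega) _ _ _ (ev_bs h1 (bs_var _ _))
    have := ev_bs_inv h2 (bs_var _ _) h3
    omega
  subst hyz
  refine ⟨n, y, ts, us, hl, ht, hu, ?_⟩
  intro i hi hj
  refine ⟨K0 + ts.length, ?_⟩
  intro K hK c S k hk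
  set S1 : List CTerm := List.replicate (K - ts.length) (.var 0) with hS1
  have hS1l : S1.length = K - ts.length := by simp [hS1]
  have go : ∀ (r : Lam) (rs : List Lam) (hr : LHSteps r (Lam.absN n (Lam.appList (.var y) rs)))
      (hl' : rs.length = ts.length) (hi' : i < rs.length),
      Ev (appl (ins K (fun v => c (n + v)) r) (tg .white (argsOf (fun v => P K (c v)) n ++
        (S1 ++ (lams .white K (.var (K - 1 - i))) :: S))))
        (appl (ins K c (rs.get ⟨i, hi'⟩)) (tg .white S)) (n + ts.length + c y) := by
    intro r rs hr hl' hi'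
    have h1 := fire hr K c S1 (lams .white K (.var (K - 1 - i))) S (by omega)
    have hlen : (rs.map (ins K c) ++ S1).length = K := by simp [hS1l]; omega
    have h2 := ev_sel (rs.map (ins K c) ++ S1) K i hlen (by omega) (tg .white S)
    have e3 : tg .white (rs.map (ins K c) ++ S1 ++ S) =
        tg .white (rs.map (ins K c) ++ S1) ++ tg .white S := by simp [tg]
    rw [e3] at h1
    have h3 := (h1.trans h2).cast (show _ = n + ts.length + c y by omega)
    rw [List.getElem_append_left (by simpa using hi')] at h3
    simpa using h3
  have g1 := go t ts ht rfl hi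
  have g2 := go u us hu hl.symm hj
  have h1 := (g1 _).2 ⟨k, rfl, hk⟩
  have h2 := h K (by omega) _ _ _ h1
  obtain ⟨k', hk', h3⟩ := (g2 _).1 h2
  have : k = k' := by omega
  subst this
  exact h3

/-! ### From the interaction preorder to the candidate -/

theorem ctx_lams (n : ℕ) : ∃ C : CCtx, ∀ x, C.fill x = lams .white n x := by
  induction n with
  | zero => exact ⟨.hole, fun _ => rfl⟩
  | succ n ih =>
    obtain ⟨C, hC⟩ := ih
    exact ⟨.lam .white C, fun x => by simp only [CCtx.fill, hC, lams]⟩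

theorem ctx_appl (S : List (Player × CTerm)) : ∀ C : CCtx, ∃ C' : CCtx, ∀ x,
    C'.fill x = appl (C.fill x) S := by
  induction S with
  | nil => intro C; exact ⟨C, fun _ => rfl⟩
  | cons a S ih =>
    intro C
    obtain ⟨C', h⟩ := ih (.appL a.1 C a.2)
    exact ⟨C', fun x => by rw [h]; rfl⟩

theorem rel_of_int (t u : Lam) (h : IntLe t u) : Rel t u := by
  refine ⟨0, ?_⟩
  intro K _ c S k hk
  set B := max (bd (t.tag .black)) (bd (u.tag .black)) with hB
  set s : ℕ → CTerm := fun v => P K (c v) with hs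
  obtain ⟨C, hC⟩ := ctx_lams B
  obtain ⟨C', hC'⟩ := ctx_appl (tg .white (argsOf s B) ++ tg .white S) C
  have go : ∀ r : Lam, bd (r.tag .black) ≤ B →
      Ev (C'.fill (r.tag .black)) (appl (ins K c r) (tg .white S)) 0 := by
    intro r hr
    rw [hC', hC]
    have h1 := ev_lams .white .white (r.tag .black) (argsOf s B) 0 B CTerm.var (tg .white S)
      (by rw [argsOf_length]; rfl)
    rw [sub_var] at h1
    have e : sub (r.tag .black) (sl (argsOf s B) CTerm.var) = ins K c r := by
      apply sub_agree _ B _ _ hr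
      intro v hv
      rw [sl_indep (argsOf s B) CTerm.var (fun v => s (B + v)) v (by rwa [argsOf_length]),
        sl_argsOf]
    simp only [lams] at h1
    rw [e] at h1
    exact h1.cast (by simp [Player.gamma])
  have h1 := (go t (le_max_left _ _) k).2 ⟨k, rfl, hk⟩
  have h2 := h C' k h1
  obtain ⟨k', hk', h3⟩ := (go u (le_max_right _ _) k).1 h2
  have : k = k' := by omega
  subst this
  exact h3

end IB

/-- Completeness: the interaction preorder is included in the Böhm preorder. -/
theorem interaction_included_in_bohm (t u : Lam) (h : IntLe t u) : BohmLe t u := by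
  exact ⟨IB.Rel, IB.rel_clause, IB.rel_of_int t u h⟩
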